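/- For every set A ⊆ 𝔽_p with |A+A| ≤ K|A| there exists a generalized arithmetic progression P of dimension d ≤ C(K) with |P| ≤ e^{C(K)}|A| containing A, where C(K) depends only on K (and one may take C(K) = (log 2K)^{3+o(1)}). -/

import Mathlib

open Finset Pointwise

lemma bog {N : ℕ} [NeZero N] (T : Finset (ZMod N)) (hT : T.Nonempty) :
    ∃ Λ : Finset (ZMod N), (Λ.card : ℝ) * (T.card : ℝ)^2 ≤ 2 * (N:ℝ)^2 ∧
      ∀ x : ZMod N, (∀ ξ ∈ Λ, 0 ≤ (ZMod.stdAddChar (ξ * x) : ℂ).re) →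
        ∃ a ∈ T, ∃ b ∈ T, ∃ c ∈ T, ∃ d ∈ T, x = a + b - c - d := by
  classical
  set e : AddChar (ZMod N) ℂ := ZMod.stdAddChar with he
  set S : ZMod N → ℂ := fun ξ => ∑ a ∈ T, e (ξ * a) with hS
  have hN : (0:ℝ) < N := by exact_mod_cast Nat.pos_of_ne_zero (NeZero.ne N)
  have hT0 : (0:ℝ) < T.card := by exact_mod_cast hT.card_pos
  have hort : ∀ b : ZMod N, ∑ ξ, e (ξ * b) = if b = 0 then (N:ℂ) else 0 := by
    intro b
    have := AddChar.sum_mulShift b (ZMod.isPrimitive_stdAddChar N)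
    simpa [ZMod.card] using this
  have hconj : ∀ x, (starRingEnd ℂ) (e x) = e (-x) := fun x => (AddChar.map_neg_eq_conj e x).symm
  have hSc : ∀ ξ, (starRingEnd ℂ) (S ξ) = ∑ a ∈ T, e (ξ * (-a)) := by
    intro ξ
    simp only [hS, map_sum, hconj, mul_neg]
  have hpars : ∑ ξ, ‖S ξ‖^2 = N * T.card := by
    have : ∑ ξ, S ξ * (starRingEnd ℂ) (S ξ) = (N:ℂ) * T.card := by
      have h1 : ∀ ξ, S ξ * (starRingEnd ℂ) (S ξ) = ∑ a ∈ T, ∑ b ∈ T, e (ξ * (a - b)) := by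
        intro ξ
        rw [hSc, Finset.sum_mul_sum]
        refine Finset.sum_congr rfl fun a _ => Finset.sum_congr rfl fun b _ => ?_
        rw [← AddChar.map_add_eq_mul]; congr 1; ring
      simp_rw [h1]
      rw [Finset.sum_comm]
      have h2 : ∀ a ∈ T, ∑ ξ, ∑ b ∈ T, e (ξ * (a - b)) = N := by
        intro a ha
        rw [Finset.sum_comm]
        simp_rw [hort, sub_eq_zero]
        simp [ha]
      rw [Finset.sum_congr rfl h2]
      simp [mul_comm]
    simp_rw [Complex.mul_conj, Complex.normSq_eq_norm_sq] at this
    exact_mod_cast this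
  set τ : ℝ := (T.card:ℝ)^3 / (2 * N) with hτ
  have hτ0 : 0 < τ := by positivity
  refine ⟨Finset.univ.filter fun ξ => τ ≤ ‖S ξ‖^2, ?_, ?_⟩
  · have h1 : ((Finset.univ.filter fun ξ => τ ≤ ‖S ξ‖^2).card : ℝ) * τ ≤ N * T.card := by
      rw [← hpars, ← nsmul_eq_mul]
      refine (Finset.card_nsmul_le_sum _ (fun ξ => ‖S ξ‖^2) τ ?_).trans ?_
      · intro ξ hξ; simpa using hξ
      · exact Finset.sum_le_sum_of_subset_of_nonneg (Finset.subset_univ _) (fun _ _ _ => by positivity)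
    rw [hτ, mul_div_assoc', div_le_iff₀ (by positivity)] at h1
    have : (T.card : ℝ) * (((Finset.univ.filter fun ξ => τ ≤ ‖S ξ‖^2).card : ℝ) * (T.card:ℝ)^2) ≤ T.card * (2 * (N:ℝ)^2) := by
      linarith
    exact le_of_mul_le_mul_left this hT0
  · intro x hx
    by_contra hcon
    push Not at hcon
    have hzero : ∑ ξ, (S ξ * (starRingEnd ℂ) (S ξ))^2 * e (ξ * (-x)) = 0 := by
      have h1 : ∀ ξ, (S ξ * (starRingEnd ℂ) (S ξ))^2 * e (ξ * (-x)) =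
          ∑ a ∈ T, ∑ b ∈ T, ∑ c ∈ T, ∑ d ∈ T, e (ξ * (a + b - c - d - x)) := by
        intro ξ
        have : (S ξ * (starRingEnd ℂ) (S ξ))^2 * e (ξ * (-x)) = 
          S ξ * (S ξ * ((starRingEnd ℂ) (S ξ) * ((starRingEnd ℂ) (S ξ) * e (ξ * (-x))))) := by ring
        rw [this, hSc]
        simp only [hS]
        rw [Finset.sum_mul]
        refine Finset.sum_congr rfl fun a _ => ?_
        rw [Finset.sum_mul, Finset.mul_sum]
        refine Finset.sum_congr rfl fun b _ => ?_
        rw [Finset.sum_mul, Finset.mul_sum, Finset.mul_sum]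
        refine Finset.sum_congr rfl fun c _ => ?_
        rw [Finset.sum_mul, Finset.mul_sum, Finset.mul_sum, Finset.mul_sum]
        refine Finset.sum_congr rfl fun d _ => ?_
        rw [← AddChar.map_add_eq_mul, ← AddChar.map_add_eq_mul, ← AddChar.map_add_eq_mul, ← AddChar.map_add_eq_mul]
        congr 1; ring
      simp_rw [h1]
      rw [Finset.sum_comm]
      refine Finset.sum_eq_zero fun a ha => ?_
      rw [Finset.sum_comm]
      refine Finset.sum_eq_zero fun b hb => ?_
      rw [Finset.sum_comm]
      refine Finset.sum_eq_zero fun c hc => ?_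
      rw [Finset.sum_comm]
      refine Finset.sum_eq_zero fun d hd => ?_
      rw [hort, if_neg]
      intro h
      exact hcon a ha b hb c hc d hd (sub_eq_zero.1 h).symm
    have hre : ∑ ξ, ‖S ξ‖^4 * (e (ξ * x)).re = 0 := by
      have := congrArg Complex.re hzero
      rw [Complex.re_sum] at this
      rw [← Complex.zero_re, ← this]
      refine Finset.sum_congr rfl fun ξ _ => ?_
      rw [Complex.mul_conj, Complex.normSq_eq_norm_sq, mul_neg, ← hconj, ← Complex.ofReal_pow,
        Complex.re_ofReal_mul, Complex.conj_re]
      ring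
    have hsum : ∑ ξ, (‖S ξ‖^4 * (e (ξ * x)).re + τ * ‖S ξ‖^2) = τ * (N * T.card) := by
      rw [Finset.sum_add_distrib, hre, ← Finset.mul_sum, hpars, zero_add]
    have hnn : ∀ ξ ∈ (Finset.univ : Finset (ZMod N)), 0 ≤ ‖S ξ‖^4 * (e (ξ * x)).re + τ * ‖S ξ‖^2 := by
      intro ξ _
      by_cases h : τ ≤ ‖S ξ‖^2
      · have := hx ξ (by simpa using h)
        positivity
      · push Not at h
        have h1 : -1 ≤ (e (ξ * x)).re := by
          have := Complex.abs_re_le_norm (e (ξ * x))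
          rw [AddChar.norm_apply] at this
          exact (abs_le.1 this).1
        have h2 : ‖S ξ‖^4 ≤ τ * ‖S ξ‖^2 := by nlinarith [sq_nonneg (‖S ξ‖)]
        nlinarith [pow_nonneg (norm_nonneg (S ξ)) 4]
    have h0 := Finset.single_le_sum hnn (Finset.mem_univ 0)
    rw [hsum] at h0
    have hS0 : S 0 = T.card := by simp [hS]
    rw [hS0] at h0
    simp only [zero_mul, AddChar.map_zero_eq_one, Complex.one_re, Complex.norm_natCast] at h0
    have : τ * (N * T.card) = (T.card:ℝ)^4 / 2 := by rw [hτ]; field_simp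
    rw [this] at h0
    have : 0 < τ * (T.card:ℝ)^2 := by positivity
    have : 0 < (T.card:ℝ)^4 := by positivity
    linarith

lemma gn_double {V : Type*} [NormedAddCommGroup V] [NormedSpace ℝ V] [FiniteDimensional ℝ V]
    (Γ : AddSubgroup V) (hfin : ∀ r : ℝ, {x | x ∈ Γ ∧ ‖x‖ ≤ r}.Finite) (r : ℝ) (hr : 0 < r) :
    {x | x ∈ Γ ∧ ‖x‖ ≤ 2 * r}.ncard ≤ 5 ^ (Module.finrank ℝ V) * {x | x ∈ Γ ∧ ‖x‖ ≤ r}.ncard := by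
  classical
  rw [Set.ncard_eq_toFinset_card _ (hfin _), Set.ncard_eq_toFinset_card _ (hfin _)]
  set F := (hfin (2 * r)).toFinset with hF
  set G := (hfin r).toFinset with hG
  set 𝒞 := F.powerset.filter fun S => ∀ c ∈ S, ∀ d ∈ S, c ≠ d → r ≤ ‖c - d‖ with h𝒞
  obtain ⟨S, hS⟩ := 𝒞.exists_maximal ⟨∅, by simp [h𝒞]⟩
  have hSm := hS.prop
  simp only [h𝒞, mem_filter, mem_powerset] at hSm
  have hcard : S.card ≤ 5 ^ (Module.finrank ℝ V) := by
    have hinj : Function.Injective (fun x : V => r⁻¹ • x) := smul_right_injective V (by positivity)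
    rw [← Finset.card_image_of_injective S hinj]
    apply Besicovitch.card_le_of_separated
    · intro c hc
      obtain ⟨x, hx, rfl⟩ := Finset.mem_image.1 hc
      have := hSm.1 hx
      simp only [hF, Set.Finite.mem_toFinset, Set.mem_ofPred_eq] at this
      rw [norm_smul, norm_inv, Real.norm_of_nonneg hr.le, inv_mul_le_iff₀ hr]
      linarith [this.2]
    · intro c hc d hd hcd
      obtain ⟨x, hx, rfl⟩ := Finset.mem_image.1 hc
      obtain ⟨y, hy, rfl⟩ := Finset.mem_image.1 hd
      rw [← smul_sub, norm_smul, norm_inv, Real.norm_of_nonneg hr.le, le_inv_mul_iff₀ hr, mul_one]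
      exact hSm.2 x hx y hy (fun h => hcd (by rw [h]))
  have hcov : F ⊆ S + G := by
    intro x hx
    have hxF := hx
    simp only [hF, Set.Finite.mem_toFinset, Set.mem_ofPred_eq] at hx
    by_cases hclose : ∃ s ∈ S, ‖x - s‖ ≤ r
    · obtain ⟨s, hs, hsr⟩ := hclose
      have hsF := hSm.1 hs
      simp only [hF, Set.Finite.mem_toFinset, Set.mem_ofPred_eq] at hsF
      refine Finset.mem_add.2 ⟨s, hs, x - s, ?_, by abel⟩
      simp only [hG, Set.Finite.mem_toFinset, Set.mem_ofPred_eq]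
      exact ⟨Γ.sub_mem hx.1 hsF.1, hsr⟩
    · push Not at hclose
      exfalso
      have hmem : insert x S ∈ 𝒞 := by
        simp only [h𝒞, mem_filter, mem_powerset]
        refine ⟨Finset.insert_subset hxF hSm.1, ?_⟩
        intro c hc d hd hcd
        rcases Finset.mem_insert.1 hc with rfl | hc' <;> rcases Finset.mem_insert.1 hd with rfl | hd'
        · exact absurd rfl hcd
        · exact (hclose d hd').le
        · rw [norm_sub_rev]; exact (hclose c hc').le
        · exact hSm.2 c hc' d hd' hcd
      have := hS.le_of_ge hmem (Finset.subset_insert x S)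
      have hxS := this (Finset.mem_insert_self x S)
      have := hclose x hxS
      simp at this
      linarith
  calc F.card ≤ (S + G).card := Finset.card_le_card hcov
    _ ≤ S.card * G.card := Finset.card_add_le
    _ ≤ _ := Nat.mul_le_mul_right _ hcard

lemma gn_double_pow {V : Type*} [NormedAddCommGroup V] [NormedSpace ℝ V] [FiniteDimensional ℝ V]
    (Γ : AddSubgroup V) (hfin : ∀ r : ℝ, {x | x ∈ Γ ∧ ‖x‖ ≤ r}.Finite) (r : ℝ) (hr : 0 < r) (j : ℕ) :
    {x | x ∈ Γ ∧ ‖x‖ ≤ 2 ^ j * r}.ncard ≤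
      (5 ^ (Module.finrank ℝ V)) ^ j * {x | x ∈ Γ ∧ ‖x‖ ≤ r}.ncard := by
  induction j with
  | zero => simp
  | succ j ih =>
    have := gn_double Γ hfin (2 ^ j * r) (by positivity)
    rw [← mul_assoc, ← pow_succ'] at this
    refine this.trans ?_
    rw [pow_succ', mul_assoc]
    exact Nat.mul_le_mul_left _ ih

open scoped RealInnerProductSpace in
lemma gn_main {V : Type*} [NormedAddCommGroup V] [InnerProductSpace ℝ V] [FiniteDimensional ℝ V]
    (k : ℕ) : ∀ (Γ : AddSubgroup V) (_ : ∀ r : ℝ, {x | x ∈ Γ ∧ ‖x‖ ≤ r}.Finite)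
      (_ : Module.finrank ℝ (Submodule.span ℝ (Γ : Set V)) ≤ k) (r : ℝ) (_ : 0 < r),
    ∃ (d : ℕ) (w : Fin d → V) (H : Fin d → ℕ), d ≤ k ∧ (∀ j, w j ∈ Γ) ∧
      ∑ j, (H j : ℝ) * ‖w j‖ ≤ r ∧
      {x | x ∈ Γ ∧ ‖x‖ ≤ r}.ncard ≤ (10 * (5 ^ Module.finrank ℝ V) ^ 2) ^ k * ∏ j, (H j + 1) ∧
      (∀ m m' : Fin d → ℤ, ∑ j, m j • w j = ∑ j, m' j • w j → m = m') := by
  induction k with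
  | zero =>
    intro Γ hfin hk r hr
    refine ⟨0, Fin.elim0, Fin.elim0, le_rfl, fun j => j.elim0, by simpa using hr.le, ?_, fun m m' _ => funext fun j => j.elim0⟩
    have h0 : Submodule.span ℝ (Γ : Set V) = ⊥ := Submodule.finrank_eq_zero.1 (Nat.le_zero.1 hk)
    have : {x | x ∈ Γ ∧ ‖x‖ ≤ r} ⊆ {0} := by
      intro x hx
      have : x ∈ Submodule.span ℝ (Γ : Set V) := Submodule.subset_span hx.1
      rw [h0] at this
      simpa using this
    have := Set.ncard_le_ncard this
    simpa using this
  | succ k ih =>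
    intro Γ hfin hk r hr
    have hC1 : 1 ≤ 10 * (5 ^ Module.finrank ℝ V) ^ 2 := by
      have : 0 < (5 ^ Module.finrank ℝ V) ^ 2 := by positivity
      omega
    by_cases hex : ∃ x ∈ Γ, x ≠ 0 ∧ ‖x‖ ≤ r
    swap
    · push Not at hex
      refine ⟨0, Fin.elim0, Fin.elim0, Nat.zero_le _, fun j => j.elim0, by simpa using hr.le, ?_, fun m m' _ => funext fun j => j.elim0⟩
      have : {x | x ∈ Γ ∧ ‖x‖ ≤ r} ⊆ {0} := by
        intro x hx
        by_contra h
        exact absurd (hex x hx.1 h) (not_lt.2 hx.2)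
      have := Set.ncard_le_ncard this
      simp only [Set.ncard_singleton] at this
      simpa using this.trans (Nat.one_le_pow _ _ hC1)
    obtain ⟨x₀, hx₀, hx₀0, hx₀r⟩ := hex
    have hfin' : {x | x ∈ Γ ∧ x ≠ 0 ∧ ‖x‖ ≤ r}.Finite :=
      (hfin r).subset fun x hx => ⟨hx.1, hx.2.2⟩
    obtain ⟨v, hv, hvmin⟩ := Set.exists_min_image _ (fun x => ‖x‖) hfin' ⟨x₀, hx₀, hx₀0, hx₀r⟩
    obtain ⟨hvΓ, hv0, hvr⟩ := hv
    have hmin : ∀ x ∈ Γ, x ≠ 0 → ‖v‖ ≤ ‖x‖ := by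
      intro x hx hx0
      by_cases h : ‖x‖ ≤ r
      · exact hvmin x ⟨hx, hx0, h⟩
      · exact hvr.trans (not_le.1 h).le
    have hvpos : 0 < ‖v‖ := norm_pos_iff.2 hv0
    set c : V →ₗ[ℝ] ℝ := (‖v‖^2)⁻¹ • (innerₛₗ ℝ v) with hc
    have hcapp : ∀ x, c x = (‖v‖^2)⁻¹ * ⟪v, x⟫ := fun x => by simp [hc]
    have hcv : c v = 1 := by
      rw [hcapp, real_inner_self_eq_norm_sq]; field_simp
    set π : V →ₗ[ℝ] V := LinearMap.id - c.smulRight v with hπ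
    have hπapp : ∀ x, π x = x - c x • v := fun x => by simp [hπ]
    have hπv : π v = 0 := by rw [hπapp, hcv]; simp
    have hcπ : ∀ x, c (π x) = 0 := fun x => by rw [hπapp]; simp [hcv]
    have hπnorm : ∀ x, ‖π x‖ ≤ ‖x‖ := by
      intro x
      have hinn : ⟪v, π x⟫ = 0 := by
        have := hcπ x
        rw [hcapp] at this
        have h2 : (‖v‖^2)⁻¹ ≠ 0 := by positivity
        exact (mul_eq_zero.1 this).resolve_left h2
      have hx : x = π x + c x • v := by rw [hπapp]; abel
      have h1 : ‖x‖ * ‖x‖ = ‖π x‖ * ‖π x‖ + ‖c x • v‖ * ‖c x • v‖ := by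
        conv_lhs => rw [hx]
        apply norm_add_sq_eq_norm_sq_add_norm_sq_real
        rw [inner_smul_right, real_inner_comm, hinn, mul_zero]
      nlinarith [norm_nonneg x, norm_nonneg (π x), mul_self_nonneg (‖c x • v‖)]
    set Γ' : AddSubgroup V := Γ.map (π : V →+ V) with hΓ'
    have hlift0 : ∀ y ∈ Γ', ∃ x ∈ Γ, π x = y ∧ ‖x‖ ≤ ‖y‖ + ‖v‖ / 2 := by
      rintro y ⟨x, hx, rfl⟩
      refine ⟨x - (round (c x) : ℤ) • v, Γ.sub_mem hx (Γ.zsmul_mem hvΓ _), ?_, ?_⟩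
      · rw [map_sub, map_zsmul, hπv]; simp
      · have : x - (round (c x) : ℤ) • v = π x + (c x - round (c x)) • v := by
          rw [hπapp, sub_smul, Int.cast_smul_eq_zsmul]; abel
        rw [this]
        refine (norm_add_le _ _).trans ?_
        rw [norm_smul, Real.norm_eq_abs]
        have := abs_sub_round (c x)
        have h3 : |c x - round (c x)| * ‖v‖ ≤ 1/2 * ‖v‖ := mul_le_mul_of_nonneg_right this hvpos.le
        change ‖π x‖ + _ ≤ ‖π x‖ + _
        linarith
    have hlift : ∀ y ∈ Γ', ∃ x ∈ Γ, π x = y ∧ ‖x‖ ≤ 2 * ‖y‖ := by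
      intro y hy
      by_cases hy0 : y = 0
      · exact ⟨0, Γ.zero_mem, by simp [hy0], by simp⟩
      · obtain ⟨x, hx, hxy, hxn⟩ := hlift0 y hy
        refine ⟨x, hx, hxy, ?_⟩
        have hx0 : x ≠ 0 := by rintro rfl; exact hy0 (by rw [← hxy]; simp)
        have := hmin x hx hx0
        linarith
    have hfinΓ' : ∀ r : ℝ, {x | x ∈ Γ' ∧ ‖x‖ ≤ r}.Finite := by
      intro s
      refine ((hfin (s + ‖v‖/2)).image π).subset ?_
      rintro y ⟨hy, hys⟩
      obtain ⟨x, hx, hxy, hxn⟩ := hlift0 y hy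
      exact ⟨x, ⟨hx, by linarith⟩, hxy⟩
    have hrank : Module.finrank ℝ (Submodule.span ℝ (Γ' : Set V)) ≤ k := by
      have hlt : Submodule.span ℝ (Γ' : Set V) < Submodule.span ℝ (Γ : Set V) := by
        refine lt_of_le_of_ne ?_ ?_
        · rw [Submodule.span_le]
          rintro y ⟨x, hx, rfl⟩
          change π x ∈ _
          rw [hπapp]
          exact Submodule.sub_mem _ (Submodule.subset_span hx) (Submodule.smul_mem _ _ (Submodule.subset_span hvΓ))
        · intro heq
          have h1 : Submodule.span ℝ (Γ' : Set V) ≤ LinearMap.ker c := by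
            rw [Submodule.span_le]
            rintro y ⟨x, hx, rfl⟩
            exact hcπ x
          have h2 : v ∈ Submodule.span ℝ (Γ' : Set V) := by rw [heq]; exact Submodule.subset_span hvΓ
          have h3 : c v = 0 := h1 h2
          rw [hcv] at h3
          exact one_ne_zero h3
      have := Submodule.finrank_lt_finrank_of_lt hlt
      omega
    obtain ⟨d, w', H', hd, hw', hsum', hcard', hinj'⟩ := ih Γ' hfinΓ' hrank (r/4) (by positivity)
    choose w hwΓ hwπ hwn using fun j => hlift (w' j) (hw' j)
    set h := ⌊r / (2 * ‖v‖)⌋₊ with hh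
    have hhle : (h:ℝ) * ‖v‖ ≤ r / 2 := by
      have : (h:ℝ) ≤ r / (2 * ‖v‖) := Nat.floor_le (by positivity)
      rw [le_div_iff₀ (by positivity)] at this
      linarith
    have hhlt : r < (h + 1) * (2 * ‖v‖) := by
      have := Nat.lt_floor_add_one (r / (2 * ‖v‖))
      rwa [div_lt_iff₀ (by positivity)] at this
    refine ⟨d + 1, Fin.cons v w, Fin.cons h H', by omega, ?_, ?_, ?_, ?_⟩
    · intro j
      refine Fin.cases ?_ (fun i => ?_) j
      · simpa using hvΓ
      · simpa using hwΓ i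
    · rw [Fin.sum_univ_succ]
      simp only [Fin.cons_zero, Fin.cons_succ]
      have : ∑ i, (H' i : ℝ) * ‖w i‖ ≤ 2 * ∑ i, (H' i : ℝ) * ‖w' i‖ := by
        rw [Finset.mul_sum]
        refine Finset.sum_le_sum fun i _ => ?_
        have := mul_le_mul_of_nonneg_left (hwn i) (Nat.cast_nonneg (α := ℝ) (H' i))
        linarith
      linarith
    · rw [Fin.prod_univ_succ]
      simp only [Fin.cons_zero, Fin.cons_succ]
      have hdb := gn_double_pow Γ' hfinΓ' (r/4) (by positivity) 2
      have hr4 : (2:ℝ)^2 * (r/4) = r := by ring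
      rw [hr4] at hdb
      have hfib : {x | x ∈ Γ ∧ ‖x‖ ≤ r}.ncard ≤ (10 * (h + 1)) * {x | x ∈ Γ' ∧ ‖x‖ ≤ r}.ncard := by
        classical
        rw [Set.ncard_eq_toFinset_card _ (hfin _), Set.ncard_eq_toFinset_card _ (hfinΓ' _)]
        refine Finset.card_le_mul_card_image_of_maps_to (f := π) ?_ _ ?_
        · intro x hx
          simp only [Set.Finite.mem_toFinset, Set.mem_ofPred_eq] at hx ⊢
          exact ⟨⟨x, hx.1, rfl⟩, (hπnorm x).trans hx.2⟩
        · intro y _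
          rcases Finset.eq_empty_or_nonempty ((hfin r).toFinset.filter fun a => π a = y) with he | ⟨x₁, hx₁⟩
          · rw [he]; simp
          set M := ⌊2 * r / ‖v‖⌋ with hM
          have hkey : ∀ x ∈ (hfin r).toFinset.filter (fun a => π a = y),
              ∃ t : ℤ, t ∈ Finset.Icc (-M) M ∧ x = x₁ + t • v := by
            intro x hx
            simp only [Finset.mem_filter, Set.Finite.mem_toFinset, Set.mem_ofPred_eq] at hx hx₁
            have hdiff : x - x₁ = c (x - x₁) • v := by
              have : π (x - x₁) = 0 := by rw [map_sub, hx.2, hx₁.2, sub_self]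
              rw [hπapp, sub_eq_zero] at this
              exact this
            set t := c (x - x₁) with ht
            have htint : (t - round t) • v = 0 := by
              by_contra hne
              have hmem : (t - round t) • v ∈ Γ := by
                rw [sub_smul, ← hdiff, Int.cast_smul_eq_zsmul]
                exact Γ.sub_mem (Γ.sub_mem hx.1.1 hx₁.1.1) (Γ.zsmul_mem hvΓ _)
              have := hmin _ hmem hne
              rw [norm_smul, Real.norm_eq_abs] at this
              have h2 := abs_sub_round t
              nlinarith
            have hteq : t = round t := by
              rcases smul_eq_zero.1 htint with h | h
              · linarith
              · exact absurd h hv0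
            have habs : |t| * ‖v‖ ≤ 2 * r := by
              rw [← Real.norm_eq_abs, ← norm_smul, ← hdiff]
              refine (norm_sub_le _ _).trans ?_
              linarith [hx.1.2, hx₁.1.2]
            have habs' : |round t| ≤ M := by
              rw [hM, Int.le_floor, Int.cast_abs, ← hteq, le_div_iff₀ hvpos]
              exact habs
            refine ⟨round t, Finset.mem_Icc.2 (abs_le.1 habs'), ?_⟩
            rw [← Int.cast_smul_eq_zsmul ℝ, ← hteq, ← hdiff]; abel
          have hsub : (hfin r).toFinset.filter (fun a => π a = y) ⊆
              (Finset.Icc (-M) M).image (fun t : ℤ => x₁ + t • v) := by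
            intro x hx
            obtain ⟨t, ht, hxt⟩ := hkey x hx
            exact Finset.mem_image.2 ⟨t, ht, hxt.symm⟩
          refine (Finset.card_le_card hsub).trans (Finset.card_image_le.trans ?_)
          rw [Int.card_Icc]
          have hMle : (M:ℝ) ≤ 2 * r / ‖v‖ := Int.floor_le _
          have hMlt : (M:ℝ) < 4 * (h + 1) := by
            refine hMle.trans_lt ?_
            rw [div_lt_iff₀ hvpos]
            linarith
          have hMlt' : M < 4 * (h + 1) := by exact_mod_cast hMlt
          omega
      calc _ ≤ (10 * (h + 1)) * {x | x ∈ Γ' ∧ ‖x‖ ≤ r}.ncard := hfib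
        _ ≤ (10 * (h + 1)) * ((5 ^ Module.finrank ℝ V) ^ 2 * ((10 * (5 ^ Module.finrank ℝ V) ^ 2) ^ k * ∏ j, (H' j + 1))) := by
          refine Nat.mul_le_mul_left _ (hdb.trans (Nat.mul_le_mul_left _ hcard'))
        _ = _ := by ring
    · intro m m' hmm
      rw [Fin.sum_univ_succ, Fin.sum_univ_succ] at hmm
      simp only [Fin.cons_zero, Fin.cons_succ] at hmm
      have h1 := congrArg π hmm
      simp only [map_add, map_zsmul, map_sum, hπv, hwπ, smul_zero, zero_add] at h1
      have h2 := hinj' (fun i => m i.succ) (fun i => m' i.succ) h1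
      have h3 : ∀ i : Fin d, m i.succ = m' i.succ := fun i => congrFun h2 i
      simp only [h3, add_left_inj] at hmm
      have h4 : m 0 = m' 0 := by
        have : (m 0 - m' 0) • v = 0 := by rw [sub_smul, hmm, sub_self]
        rw [← Int.cast_smul_eq_zsmul ℝ] at this
        rcases smul_eq_zero.1 this with h | h
        · have : m 0 - m' 0 = 0 := by exact_mod_cast h
          omega
        · exact absurd h hv0
      funext j
      refine Fin.cases h4 h3 j

lemma bohr {N : ℕ} [NeZero N] (Λ : Finset (ZMod N)) (n : ℕ) (hn : n = Λ.card + 1) :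
    ∃ (d : ℕ) (x : Fin d → ZMod N) (H : Fin d → ℕ), d ≤ n ∧
      N ≤ ((5 ^ n) ^ (n + 1) * (10 * (5 ^ n) ^ 2) ^ n) * ∏ j, (H j + 1) ∧
      (∀ m : Fin d → ℤ, (∀ j, |m j| ≤ H j) → ∀ ξ ∈ Λ,
        0 ≤ (ZMod.stdAddChar (ξ * ∑ j, m j • x j) : ℂ).re) ∧
      (∀ m m' : Fin d → ℤ, (∀ j, |m j| ≤ H j) → (∀ j, |m' j| ≤ H j) →
        ∑ j, m j • x j = ∑ j, m' j • x j → m = m') := by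
  classical
  have hN : (0:ℝ) < N := by exact_mod_cast Nat.pos_of_ne_zero (NeZero.ne N)
  let V := EuclideanSpace ℝ (Option Λ)
  have hrk : Module.finrank ℝ V = n := by
    simp [V, hn]
  let fr : Option Λ → ℤ := fun o => o.elim 1 (fun s => (s.1.val : ℤ))
  let Rel : ℤ → V → Prop := fun x y => ∀ i, ∃ z : ℤ, (N:ℝ) * y i = fr i * x + N * z
  have hRel0 : Rel 0 0 := fun i => ⟨0, by simp⟩
  have hReladd : ∀ x y x' y', Rel x y → Rel x' y' → Rel (x + x') (y + y') := by
    intro x y x' y' h h' i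
    obtain ⟨z, hz⟩ := h i
    obtain ⟨z', hz'⟩ := h' i
    exact ⟨z + z', by push_cast; rw [PiLp.add_apply, mul_add, hz, hz']; ring⟩
  have hRelneg : ∀ x y, Rel x y → Rel (-x) (-y) := by
    intro x y h i
    obtain ⟨z, hz⟩ := h i
    exact ⟨-z, by push_cast; rw [PiLp.neg_apply, mul_neg, hz]; ring⟩
  have hRelsmul : ∀ (m : ℤ) x y, Rel x y → Rel (m * x) (m • y) := by
    intro m x y h i
    obtain ⟨z, hz⟩ := h i
    refine ⟨m * z, ?_⟩
    push_cast
    rw [← Int.cast_smul_eq_zsmul ℝ, PiLp.smul_apply, smul_eq_mul]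
    linear_combination (m:ℝ) * hz
  let Γ : AddSubgroup V :=
    { carrier := {y | ∃ x, Rel x y}
      zero_mem' := ⟨0, hRel0⟩
      add_mem' := by
        rintro a b ⟨x, hx⟩ ⟨x', hx'⟩
        exact ⟨x + x', hReladd _ _ _ _ hx hx'⟩
      neg_mem' := by
        rintro a ⟨x, hx⟩
        exact ⟨-x, hRelneg _ _ hx⟩ }
  have hΓ : ∀ y, y ∈ Γ ↔ ∃ x, Rel x y := fun y => Iff.rfl
  have hcoord : ∀ (y : V) i, |y i| ≤ ‖y‖ := fun y i => by
    simpa using PiLp.norm_apply_le y i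
  have hfin : ∀ r : ℝ, {y | y ∈ Γ ∧ ‖y‖ ≤ r}.Finite := by
    intro r
    let M : ℤ := ⌊N * r⌋
    let F : Finset (Option Λ → ℤ) := Fintype.piFinset fun _ => Finset.Icc (-M) M
    refine ((F : Set (Option Λ → ℤ)).toFinite.image
      (fun z => (WithLp.toLp 2 (fun i => (z i : ℝ) / N) : V))).subset ?_
    rintro y ⟨⟨x, hx⟩, hyr⟩
    choose z hz using hx
    refine ⟨fun i => fr i * x + N * z i, ?_, ?_⟩
    · simp only [F, Fintype.coe_piFinset, Set.mem_pi, Finset.coe_Icc, Set.mem_univ, true_implies]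
      intro i
      apply abs_le.1
      rw [Int.le_floor]
      push_cast
      rw [← hz i, abs_mul, abs_of_pos hN]
      exact mul_le_mul_of_nonneg_left ((hcoord y i).trans hyr) hN.le
    · ext i
      simp only
      push_cast
      rw [← hz i]
      field_simp
  have hspan : Module.finrank ℝ (Submodule.span ℝ (Γ : Set V)) ≤ n := by
    rw [← hrk]; exact Submodule.finrank_le _
  obtain ⟨d, w, H, hd, hw, hsum, hcard, hinj⟩ := gn_main n Γ hfin hspan (1/4) (by norm_num)
  have hdb := gn_double_pow Γ hfin (1/4) (by norm_num) (n + 1)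
  rw [hrk] at hcard hdb
  choose x hx using hw
  have hRelsum : ∀ m : Fin d → ℤ, Rel (∑ j, m j * x j) (∑ j, m j • w j) := by
    intro m
    have : ∀ s : Finset (Fin d), Rel (∑ j ∈ s, m j * x j) (∑ j ∈ s, m j • w j) := by
      intro s
      induction s using Finset.induction_on with
      | empty => simpa using hRel0
      | insert a s ha ih =>
        rw [Finset.sum_insert ha, Finset.sum_insert ha]
        exact hReladd _ _ _ _ (hRelsmul _ _ _ (hx a)) ih
    exact this _
  have hnorm : ∀ m : Fin d → ℤ, (∀ j, |m j| ≤ H j) → ‖∑ j, m j • w j‖ ≤ 1/4 := by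
    intro m hm
    refine (norm_sum_le _ _).trans (le_trans (Finset.sum_le_sum fun j _ => ?_) hsum)
    rw [← Int.cast_smul_eq_zsmul ℝ, norm_smul, Real.norm_eq_abs]
    refine mul_le_mul_of_nonneg_right ?_ (norm_nonneg _)
    exact_mod_cast hm j
  have hcast : ∀ m : Fin d → ℤ, ∑ j, m j • ((x j : ℤ) : ZMod N) = ((∑ j, m j * x j : ℤ) : ZMod N) := by
    intro m; push_cast; simp [zsmul_eq_mul]
  refine ⟨d, fun j => (x j : ZMod N), H, hd, ?_, ?_, ?_⟩
  · have hNle : N ≤ {y | y ∈ Γ ∧ ‖y‖ ≤ 2 ^ (n + 1) * (1/4)}.ncard := by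
      let Y : ℕ → V := fun t => WithLp.toLp 2 (fun i => ((fr i : ℝ) * t / N) - round ((fr i : ℝ) * t / N))
      have hYi : ∀ t i, Y t i = ((fr i : ℝ) * t / N) - round ((fr i : ℝ) * t / N) := fun t i => rfl
      have hsub : ((Finset.range N).image Y : Set V) ⊆ {y | y ∈ Γ ∧ ‖y‖ ≤ 2 ^ (n + 1) * (1/4)} := by
        intro y hy
        simp only [Finset.coe_image, Set.mem_image] at hy
        obtain ⟨t, _, rfl⟩ := hy
        refine ⟨⟨t, fun i => ⟨- round ((fr i : ℝ) * t / N), ?_⟩⟩, ?_⟩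
        · rw [hYi]; push_cast; field_simp; ring
        · rw [← pow_le_pow_iff_left₀ (norm_nonneg _) (by positivity) (two_ne_zero),
            EuclideanSpace.norm_sq_eq]
          have h1 : ∑ i, ‖Y t i‖^2 ≤ ∑ i : Option Λ, (1/4 : ℝ) := by
            refine Finset.sum_le_sum fun i _ => ?_
            rw [hYi, Real.norm_eq_abs]
            have := abs_sub_round ((fr i : ℝ) * t / N)
            nlinarith [abs_nonneg ((fr i : ℝ) * t / N - round ((fr i : ℝ) * t / N))]
          have h2 : ∑ i : Option Λ, (1/4 : ℝ) = n / 4 := by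
            simp [hn]; ring
          have h3 : ((2:ℝ) ^ (n + 1) * (1/4))^2 = 4 ^ n / 4 := by
            rw [mul_pow, ← pow_mul, mul_comm (n+1) 2, pow_mul, pow_succ]; norm_num; ring
          have h4 : (n:ℝ) ≤ 4 ^ n := by
            exact_mod_cast (Nat.lt_pow_self (by norm_num : 1 < 4)).le
          rw [h3]
          linarith
      have hYinj : Set.InjOn Y (Finset.range N : Set ℕ) := by
        intro s hs t ht hst
        have h1 := congrArg (fun y : V => y none) hst
        simp only [hYi, fr, Option.elim, Int.cast_one, one_mul] at h1
        set a := round ((s:ℝ)/N)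
        set b := round ((t:ℝ)/N)
        have h2 : (s:ℝ) - t = N * (a - b) := by
          field_simp at h1; linarith
        have h3 : (s:ℤ) - t = N * (a - b) := by exact_mod_cast h2
        have hs' : s < N := by simpa using hs
        have ht' : t < N := by simpa using ht
        have h4 : (s:ℤ) - t = 0 := by
          refine Int.eq_zero_of_abs_lt_dvd ⟨_, h3⟩ ?_
          rw [abs_lt]; omega
        omega
      calc N = ((Finset.range N).image Y).card := by
            rw [Finset.card_image_of_injOn hYinj, Finset.card_range]
        _ = (((Finset.range N).image Y : Finset V) : Set V).ncard := (Set.ncard_coe_finset _).symm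
        _ ≤ _ := Set.ncard_le_ncard hsub (hfin _)
    refine hNle.trans (hdb.trans ?_)
    rw [mul_assoc]
    exact Nat.mul_le_mul_left _ hcard
  · intro m hm ξ hξ
    rw [hcast]
    obtain ⟨z, hz⟩ := hRelsum m (some ⟨ξ, hξ⟩)
    set X := ∑ j, m j * x j with hX
    set y := ∑ j, m j • w j with hy
    have hyi := (hcoord y (some ⟨ξ, hξ⟩)).trans (hnorm m hm)
    simp only [fr, Option.elim] at hz
    have h1 : ξ * (X : ZMod N) = (((ξ.val : ℤ) * X : ℤ) : ZMod N) := by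
      push_cast; simp
    rw [h1, ZMod.stdAddChar_coe]
    have h2 : (2 * Real.pi * Complex.I * (((ξ.val : ℤ) * X : ℤ) : ℂ) / N : ℂ) =
        ((2 * Real.pi * y (some ⟨ξ, hξ⟩) - z * (2 * Real.pi) : ℝ) : ℂ) * Complex.I := by
      have h3 : ((((ξ.val : ℤ) * X : ℤ) : ℝ)) / N = y (some ⟨ξ, hξ⟩) - z := by
        push_cast
        push_cast at hz
        field_simp
        linarith
      have h4 : (((((ξ.val : ℤ) * X : ℤ) : ℝ) / N : ℝ) : ℂ) = ((y (some ⟨ξ, hξ⟩) - z : ℝ) : ℂ) := by rw [h3]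
      push_cast at h4 ⊢
      linear_combination (2 * Real.pi * Complex.I) * h4
    rw [h2, Complex.exp_ofReal_mul_I_re, Real.cos_sub_int_mul_two_pi]
    obtain ⟨hl, hu⟩ := abs_le.1 hyi
    apply Real.cos_nonneg_of_neg_pi_div_two_le_of_le <;> nlinarith [Real.pi_pos]
  · intro m m' hm hm' heq
    rw [hcast, hcast, ZMod.intCast_eq_intCast_iff_dvd_sub] at heq
    obtain ⟨q, hq⟩ := heq
    apply hinj
    rw [← sub_eq_zero]
    ext i
    obtain ⟨z, hz⟩ := hRelsum m i
    obtain ⟨z', hz'⟩ := hRelsum m' i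
    have h1 := (hcoord _ i).trans (hnorm m hm)
    have h2 := (hcoord _ i).trans (hnorm m' hm')
    rw [PiLp.sub_apply]
    set y := (∑ j, m j • w j) i
    set y' := (∑ j, m' j • w j) i
    have hq' : ((∑ j, m' j * x j : ℤ) : ℝ) - ((∑ j, m j * x j : ℤ) : ℝ) = N * q := by exact_mod_cast hq
    have h3 : y - y' = ((z - z' - fr i * q : ℤ) : ℝ) := by
      have : (N:ℝ) * (y - y') = N * ((z - z' - fr i * q : ℤ) : ℝ) := by
        push_cast
        rw [mul_sub, hz, hz']
        linear_combination (-(fr i : ℝ)) * hq'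
      exact mul_left_cancel₀ hN.ne' this
    have h4 : |y - y'| < 1 := by
      refine (abs_sub _ _).trans_lt ?_
      linarith
    rw [h3] at h4 ⊢
    have h5 : |z - z' - fr i * q| < 1 := by exact_mod_cast h4
    rw [Int.abs_lt_one_iff.1 h5]
    simp

lemma sum_mem_nsmul' {G : Type*} [AddCommGroup G] [DecidableEq G] (A : Finset G) (n : ℕ)
    (a : Fin n → G) (ha : ∀ i, a i ∈ A) : ∑ i, a i ∈ n • A := by
  induction n with
  | zero => simp
  | succ n ih =>
    rw [Fin.sum_univ_castSucc, succ_nsmul]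
    exact Finset.add_mem_add (ih _ fun i => ha _) (ha _)

lemma model {p : ℕ} (hp : p.Prime) (A : Finset (ZMod p)) (hA : A.Nonempty) (N : ℕ)
    (hN : N = (6 • A - 6 • A).card) :
    ∃ (A' : Finset (ZMod p)) (φ : ZMod p → ZMod N), A' ⊆ A ∧ A.card ≤ 6 * A'.card ∧
      ∀ a b : Fin 6 → ZMod p, (∀ i, a i ∈ A') → (∀ i, b i ∈ A') →
        (∑ i, φ (a i) = ∑ i, φ (b i) ↔ ∑ i, a i = ∑ i, b i) := by
  classical
  have : Fact p.Prime := ⟨hp⟩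
  have hp2 := hp.two_le
  set D := (6 • A - 6 • A).erase 0 with hD
  have h6 : (6 • A).Nonempty := by
    obtain ⟨x, hx⟩ := hA
    exact ⟨_, sum_mem_nsmul' A 6 (fun _ => x) (fun _ => hx)⟩
  have h0mem : (0 : ZMod p) ∈ 6 • A - 6 • A := by
    obtain ⟨x, hx⟩ := h6
    exact Finset.mem_sub.2 ⟨x, hx, x, hx, sub_self x⟩
  have hDcard : D.card = N - 1 := by rw [hD, Finset.card_erase_of_mem h0mem, hN]
  have hNpos : 0 < N := by rw [hN]; exact Finset.card_pos.2 ⟨0, h0mem⟩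
  let U : Finset (ZMod p) := Finset.univ.erase 0
  have hU : U.card = p - 1 := by simp [U, Finset.card_erase_of_mem, ZMod.card]
  let bad : ZMod p → Finset (ZMod p) := fun y => U.filter fun l => N ∣ (l * y).val
  have hbad : ∀ y ∈ D, (bad y).card ≤ (p - 1) / N := by
    intro y hy
    have hy0 : y ≠ 0 := Finset.ne_of_mem_erase hy
    rw [← Nat.Ioc_filter_dvd_card_eq_div]
    refine Finset.card_le_card_of_injOn (fun l => (l * y).val) ?_ ?_
    · intro l hl
      have hl' : l ≠ 0 ∧ N ∣ (l * y).val := by simpa [bad, U] using hl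
      have hne : (l * y).val ≠ 0 := by
        rw [Ne, ZMod.val_eq_zero]; exact mul_ne_zero hl'.1 hy0
      have hlt := ZMod.val_lt (l * y)
      simp only [Finset.coe_filter, Finset.mem_Ioc]
      exact ⟨⟨by omega, by omega⟩, hl'.2⟩
    · intro l _ l' _ h
      exact mul_right_cancel₀ hy0 (ZMod.val_injective p h)
  obtain ⟨l, hlU, hl⟩ : ∃ l ∈ U, l ∉ D.biUnion bad := by
    apply Finset.exists_mem_notMem_of_card_lt_card
    have h1 : (D.biUnion bad).card ≤ (N - 1) * ((p - 1) / N) := by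
      rw [← hDcard]
      exact Finset.card_biUnion_le_card_mul _ _ _ hbad
    rw [hU]
    refine h1.trans_lt ?_
    have h2 : N * ((p - 1) / N) ≤ p - 1 := Nat.mul_div_le _ _
    rcases Nat.eq_zero_or_pos ((p - 1) / N) with h | h
    · rw [h]; omega
    · refine lt_of_lt_of_le ?_ h2
      exact Nat.mul_lt_mul_of_pos_right (by omega) h
  have hl0 : l ≠ 0 := by simpa [U] using hlU
  have hgood : ∀ y ∈ 6 • A - 6 • A, y ≠ 0 → ¬ N ∣ (l * y).val := by
    intro y hy hy0 hdiv
    apply hl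
    refine Finset.mem_biUnion.2 ⟨y, Finset.mem_erase.2 ⟨hy0, hy⟩, ?_⟩
    simp only [bad, Finset.mem_filter]
    exact ⟨hlU, hdiv⟩
  let g : ZMod p → ℕ := fun a => 6 * (l * a).val / p
  have hg : ∀ a ∈ A, g a ∈ Finset.range 6 := by
    intro a _
    rw [Finset.mem_range, Nat.div_lt_iff_lt_mul hp.pos]
    have := ZMod.val_lt (l * a)
    omega
  obtain ⟨j, _, hj⟩ := Finset.exists_max_image (Finset.range 6)
    (fun j => (A.filter fun a => g a = j).card) ⟨0, by simp⟩
  refine ⟨A.filter fun a => g a = j, fun a => (((l * a).val : ℕ) : ZMod N), Finset.filter_subset _ _, ?_, ?_⟩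
  · rw [Finset.card_eq_sum_card_fiberwise hg]
    refine (Finset.sum_le_card_nsmul _ _ _ hj).trans ?_
    simp
  · intro a b ha hb
    set u : Fin 6 → ℤ := fun i => ((l * a i).val : ℤ) - ((l * b i).val : ℤ) with hu
    have hub : ∀ i, 6 * |u i| < p := by
      intro i
      have h1 := (Finset.mem_filter.1 (ha i)).2
      have h2 := (Finset.mem_filter.1 (hb i)).2
      simp only [g] at h1 h2
      have e1 := Nat.div_add_mod (6 * (l * a i).val) p
      have e2 := Nat.div_add_mod (6 * (l * b i).val) p
      have m1 := Nat.mod_lt (6 * (l * a i).val) hp.pos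
      have m2 := Nat.mod_lt (6 * (l * b i).val) hp.pos
      rw [h1] at e1
      rw [h2] at e2
      have : 6 * |u i| = |6 * u i| := by rw [abs_mul]; norm_num
      rw [this, abs_lt]
      simp only [hu]
      generalize p * j = q at *
      constructor <;> omega
    set I : ℤ := ∑ i, u i with hI
    have hIlt : |I| < p := by
      have h1 : |I| ≤ ∑ i, |u i| := Finset.abs_sum_le_sum_abs _ _
      have h2 : ∑ i, 6 * |u i| < ∑ i : Fin 6, (p:ℤ) :=
        Finset.sum_lt_sum_of_nonempty ⟨0, Finset.mem_univ _⟩ fun i _ => hub i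
      rw [← Finset.mul_sum] at h2
      simp at h2
      linarith
    set y : ZMod p := ∑ i, a i - ∑ i, b i with hy
    have hyD : y ∈ 6 • A - 6 • A := Finset.sub_mem_sub
      (sum_mem_nsmul' A 6 a fun i => (Finset.mem_filter.1 (ha i)).1)
      (sum_mem_nsmul' A 6 b fun i => (Finset.mem_filter.1 (hb i)).1)
    have hyD' : -y ∈ 6 • A - 6 • A := by
      rw [hy, neg_sub]
      exact Finset.sub_mem_sub
        (sum_mem_nsmul' A 6 b fun i => (Finset.mem_filter.1 (hb i)).1)
        (sum_mem_nsmul' A 6 a fun i => (Finset.mem_filter.1 (ha i)).1)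
    have hIp : (I : ZMod p) = l * y := by
      simp only [hI, hu, hy]
      push_cast
      simp only [ZMod.natCast_val, ZMod.cast_id', id_eq]
      rw [Finset.sum_sub_distrib, ← Finset.mul_sum, ← Finset.mul_sum, mul_sub]
    have hIN : (I : ZMod N) = ∑ i, (((l * a i).val : ℕ) : ZMod N) - ∑ i, (((l * b i).val : ℕ) : ZMod N) := by
      simp only [hI, hu]
      push_cast
      rw [Finset.sum_sub_distrib]
    constructor
    · intro h
      have h1 : (I : ZMod N) = 0 := by rw [hIN]; exact sub_eq_zero.2 h
      rw [ZMod.intCast_zmod_eq_zero_iff_dvd] at h1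
      by_contra hne
      have hy0 : y ≠ 0 := sub_ne_zero.2 hne
      have hlt := abs_lt.1 hIlt
      rcases le_total 0 I with hs | hs
      · have hv : ((l * y).val : ℤ) = I := by
          rw [← hIp, ZMod.val_intCast, Int.emod_eq_of_lt hs hlt.2]
        apply hgood y hyD hy0
        rw [← hv] at h1
        exact_mod_cast h1
      · have hv : ((l * (-y)).val : ℤ) = -I := by
          rw [mul_neg, ← hIp, ← Int.cast_neg, ZMod.val_intCast, Int.emod_eq_of_lt (by omega) (by omega)]
        apply hgood (-y) hyD' (neg_ne_zero.2 hy0)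
        have h2 : (N:ℤ) ∣ -I := (dvd_neg).2 h1
        rw [← hv] at h2
        exact_mod_cast h2
    · intro h
      have hy0 : y = 0 := sub_eq_zero.2 h
      rw [hy0, mul_zero, ZMod.intCast_zmod_eq_zero_iff_dvd] at hIp
      have hI0 : I = 0 := Int.eq_zero_of_abs_lt_dvd hIp hIlt
      rw [hI0, Int.cast_zero] at hIN
      exact sub_eq_zero.1 hIN.symm

lemma pr_real {G : Type*} [AddCommGroup G] [DecidableEq G] (A : Finset G) (hA : A.Nonempty) (K : ℝ)
    (hK : ((A + A).card : ℝ) ≤ K * A.card) (m n : ℕ) :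
    ((m • A - n • A).card : ℝ) ≤ K ^ (m + n) * A.card := by
  have h := Finset.pluennecke_ruzsa_inequality_nsmul_sub_nsmul_add hA A m n
  have hA0 : (0:ℝ) < A.card := by exact_mod_cast hA.card_pos
  have h' : ((m • A - n • A).card : ℝ) ≤ (((A + A).card : ℝ) / A.card) ^ (m + n) * A.card := by
    have h2 := (NNRat.cast_le (K := ℝ)).2 h
    push_cast at h2
    exact h2
  refine h'.trans ?_
  refine mul_le_mul_of_nonneg_right ?_ hA0.le
  refine pow_le_pow_left₀ (by positivity) ?_ _
  rwa [div_le_iff₀ hA0]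

lemma pull {p N d : ℕ} (A' : Finset (ZMod p)) (φ : ZMod p → ZMod N)
    (hφ : ∀ a b : Fin 6 → ZMod p, (∀ i, a i ∈ A') → (∀ i, b i ∈ A') →
        (∑ i, φ (a i) = ∑ i, φ (b i) ↔ ∑ i, a i = ∑ i, b i))
    (x : Fin d → ZMod N) (H : Fin d → ℕ)
    (hx : ∀ m : Fin d → ℕ, (∀ j, m j ≤ H j) → ∃ a ∈ A', ∃ b ∈ A', ∃ c ∈ A', ∃ e ∈ A',
      ∑ j, m j • x j = φ a + φ b - φ c - φ e)
    (hinj : ∀ m m' : Fin d → ℕ, (∀ j, m j ≤ H j) → (∀ j, m' j ≤ H j) →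
      ∑ j, m j • x j = ∑ j, m' j • x j → m = m') :
    ∃ q : Fin d → ZMod p, (∀ m : Fin d → ℕ, (∀ j, m j ≤ H j) → ∑ j, m j • q j ∈ 2 • A' - 2 • A') ∧
      (∀ m m' : Fin d → ℕ, (∀ j, m j ≤ H j) → (∀ j, m' j ≤ H j) →
        ∑ j, m j • q j = ∑ j, m' j • q j → m = m') := by
  classical
  have hφ' : ∀ a₁ a₂ a₃ a₄ a₅ a₆ b₁ b₂ b₃ b₄ b₅ b₆, a₁ ∈ A' → a₂ ∈ A' → a₃ ∈ A' → a₄ ∈ A' → a₅ ∈ A' →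
      a₆ ∈ A' → b₁ ∈ A' → b₂ ∈ A' → b₃ ∈ A' → b₄ ∈ A' → b₅ ∈ A' → b₆ ∈ A' →
      (φ a₁ + φ a₂ + φ a₃ + φ a₄ + φ a₅ + φ a₆ = φ b₁ + φ b₂ + φ b₃ + φ b₄ + φ b₅ + φ b₆ ↔
        a₁ + a₂ + a₃ + a₄ + a₅ + a₆ = b₁ + b₂ + b₃ + b₄ + b₅ + b₆) := by
    intro a₁ a₂ a₃ a₄ a₅ a₆ b₁ b₂ b₃ b₄ b₅ b₆ h1 h2 h3 h4 h5 h6 g1 g2 g3 g4 g5 g6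
    have := hφ ![a₁, a₂, a₃, a₄, a₅, a₆] ![b₁, b₂, b₃, b₄, b₅, b₆]
      (by intro i; fin_cases i <;> simpa) (by intro i; fin_cases i <;> simpa)
    simpa [Fin.sum_univ_six] using this
  have hx' : ∀ m : Fin d → ℕ, ∃ a b c e : ZMod p, (∀ j, m j ≤ H j) → a ∈ A' ∧ b ∈ A' ∧ c ∈ A' ∧ e ∈ A' ∧
      ∑ j, m j • x j = φ a + φ b - φ c - φ e := by
    intro m
    by_cases hm : ∀ j, m j ≤ H j
    · obtain ⟨a, ha, b, hb, c, hc, e, he, h⟩ := hx m hm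
      exact ⟨a, b, c, e, fun _ => ⟨ha, hb, hc, he, h⟩⟩
    · exact ⟨0, 0, 0, 0, fun h => absurd h hm⟩
  choose a b c e hr using hx'
  let Y : (Fin d → ℕ) → ZMod p := fun m => a m + b m - c m - e m
  have hadd : ∀ m m' : Fin d → ℕ, (∀ j, (m + m') j ≤ H j) → Y (m + m') = Y m + Y m' := by
    intro m m' hm
    obtain ⟨a3, b3, c3, e3, h3⟩ := hr (m + m') hm
    obtain ⟨a1, b1, c1, e1, h1⟩ := hr m (fun j => le_trans (by simp) (hm j))
    obtain ⟨a2, b2, c2, e2, h2⟩ := hr m' (fun j => le_trans (by simp) (hm j))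
    have hsum : ∑ j, (m + m') j • x j = ∑ j, m j • x j + ∑ j, m' j • x j := by
      simp [add_smul, Finset.sum_add_distrib]
    rw [h3, h1, h2] at hsum
    have := (hφ' _ _ _ _ _ _ _ _ _ _ _ _ a1 b1 a2 b2 c3 e3 c1 e1 c2 e2 a3 b3).1 (by
      linear_combination -hsum)
    simp only [Y]
    linear_combination -this
  have hYinj : ∀ m m' : Fin d → ℕ, (∀ j, m j ≤ H j) → (∀ j, m' j ≤ H j) → Y m = Y m' → m = m' := by
    intro m m' hm hm' h
    obtain ⟨a1, b1, c1, e1, h1⟩ := hr m hm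
    obtain ⟨a2, b2, c2, e2, h2⟩ := hr m' hm'
    apply hinj m m' hm hm'
    rw [h1, h2]
    simp only [Y] at h
    have := (hφ' _ _ _ _ _ _ _ _ _ _ _ _ a1 b1 c2 e2 a1 a1 c1 e1 a2 b2 a1 a1).2 (by
      linear_combination h)
    linear_combination this
  have hY0 : Y 0 = 0 := by
    have := hadd 0 0 (by simp)
    simpa using this
  let q : Fin d → ZMod p := fun j => Y (Pi.single j 1)
  have hlin : ∀ (n : ℕ) (m : Fin d → ℕ), ∑ j, m j = n → (∀ j, m j ≤ H j) → Y m = ∑ j, m j • q j := by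
    intro n
    induction n with
    | zero =>
      intro m hm _
      have : m = 0 := by
        funext j
        have := (Finset.sum_eq_zero_iff.1 hm) j (Finset.mem_univ j)
        simpa using this
      subst this
      simp [hY0]
    | succ n ih =>
      intro m hm hmH
      obtain ⟨j, hj⟩ : ∃ j, m j ≠ 0 := by
        by_contra hcon
        push Not at hcon
        simp [hcon] at hm
      let m' : Fin d → ℕ := m - Pi.single j 1
      have hmm : m = m' + Pi.single j 1 := by
        funext i
        simp only [m', Pi.add_apply, Pi.sub_apply]
        by_cases hij : i = j
        · subst hij; simp; omega
        · simp [hij]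
      have hs : ∑ i, m' i = n := by
        rw [hmm] at hm
        simp only [Pi.add_apply, Finset.sum_add_distrib, Finset.sum_pi_single', Finset.mem_univ, if_true] at hm
        simp at hm
        omega
      have hm'H : ∀ i, m' i ≤ H i := fun i => le_trans (by simp [m']) (hmH i)
      have h1 := hadd m' (Pi.single j 1) (by rw [← hmm]; exact hmH)
      rw [← hmm, ih m' hs hm'H] at h1
      rw [h1]
      conv_rhs => rw [hmm]
      simp only [Pi.add_apply, add_smul, Finset.sum_add_distrib]
      congr 1
      rw [Finset.sum_eq_single j]
      · simp [q]
      · intro i _ hij; simp [hij]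
      · simp
  refine ⟨q, ?_, ?_⟩
  · intro m hm
    rw [← hlin _ m rfl hm]
    obtain ⟨a1, b1, c1, e1, h1⟩ := hr m hm
    simp only [Y]
    rw [sub_sub, two_nsmul]
    exact Finset.sub_mem_sub (Finset.add_mem_add a1 b1) (Finset.add_mem_add c1 e1)
  · intro m m' hm hm' h
    rw [← hlin _ m rfl hm, ← hlin _ m' rfl hm'] at h
    exact hYinj m m' hm hm' h

lemma exists_gap (K : ℝ) (hK1 : 1 ≤ K) : ∃ C : ℕ, ∀ p : ℕ, p.Prime → ∀ A : Finset (ZMod p), A.Nonempty →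
    ((A + A).card : ℝ) ≤ K * A.card →
    ∃ (d : ℕ) (q : Fin d → ZMod p) (H : Fin d → ℕ), d ≤ C ∧ A.card ≤ C * ∏ j, (H j + 1) ∧
      (∀ m : Fin d → ℕ, (∀ j, m j ≤ H j) → ∑ j, m j • q j ∈ 2 • A - 2 • A) ∧
      (∀ m m' : Fin d → ℕ, (∀ j, m j ≤ H j) → (∀ j, m' j ≤ H j) →
        ∑ j, m j • q j = ∑ j, m' j • q j → m = m') := by
  classical
  let n₀ : ℕ := ⌈72 * K ^ 24⌉₊ + 1
  let c : ℕ → ℕ := fun n => (5 ^ n) ^ (n + 1) * (10 * (5 ^ n) ^ 2) ^ n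
  have hcmono : ∀ n, n ≤ n₀ → c n ≤ c n₀ := by
    intro n hn
    have h5 : 5 ^ n ≤ 5 ^ n₀ := Nat.pow_le_pow_right (by norm_num) hn
    have h5' : 0 < 5 ^ n₀ := by positivity
    refine Nat.mul_le_mul ?_ ?_
    · exact (Nat.pow_le_pow_left h5 _).trans (Nat.pow_le_pow_right h5' (by omega))
    · refine (Nat.pow_le_pow_left (Nat.mul_le_mul_left 10 (Nat.pow_le_pow_left h5 2)) _).trans
        (Nat.pow_le_pow_right (by positivity) hn)
  refine ⟨n₀ + c n₀, ?_⟩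
  intro p hp A hA hK
  have : Fact p.Prime := ⟨hp⟩
  obtain ⟨N, hN⟩ : ∃ N, N = (6 • A - 6 • A).card := ⟨_, rfl⟩
  obtain ⟨A', φ, hA'A, hA'card, hφ⟩ := model hp A hA N hN
  have hA0 : 0 < A.card := hA.card_pos
  have hA'0 : 0 < A'.card := by omega
  have hA'ne : A'.Nonempty := Finset.card_pos.1 hA'0
  have hAN : A.card ≤ N := by
    obtain ⟨x, hx⟩ := hA
    have h5 : (6 • A) = A + 5 • A := by rw [← succ_nsmul']
    let z := ∑ i : Fin 5, (fun _ => x) i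
    let y := ∑ i : Fin 6, (fun _ => x) i
    have hz : z ∈ 5 • A := sum_mem_nsmul' A 5 (fun _ => x) (fun _ => hx)
    have hy : y ∈ 6 • A := sum_mem_nsmul' A 6 (fun _ => x) (fun _ => hx)
    rw [hN]
    refine Finset.card_le_card_of_injOn (fun t => t + z - y) ?_ ?_
    · intro t ht
      refine Finset.sub_mem_sub ?_ hy
      rw [h5]
      exact Finset.add_mem_add ht hz
    · intro t _ t' _ h
      simpa using h
  have : NeZero N := ⟨by omega⟩
  have hNle : (N:ℝ) ≤ K ^ 12 * A.card := by
    rw [hN]; exact pr_real A hA K hK 6 6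
  have hφinj : Set.InjOn φ A' := by
    intro s hs t ht hst
    have := hφ ![s, s, s, s, s, s] ![t, s, s, s, s, s]
      (by intro i; fin_cases i <;> simpa) (by intro i; fin_cases i <;> simpa)
    simp [Fin.sum_univ_six, hst] at this
    exact this
  set T := A'.image φ with hT
  have hTcard : T.card = A'.card := Finset.card_image_of_injOn hφinj
  obtain ⟨Λ, hΛcard, hΛ⟩ := bog T (hA'ne.image φ)
  have hΛle : Λ.card + 1 ≤ n₀ := by
    have h1 : (Λ.card : ℝ) ≤ 72 * K ^ 24 := by
      have hT0 : (0:ℝ) < T.card := by rw [hTcard]; exact_mod_cast hA'0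
      have h2 : (A.card : ℝ) ≤ 6 * T.card := by rw [hTcard]; exact_mod_cast hA'card
      have h3 : (N:ℝ) ≤ 6 * K ^ 12 * T.card := by
        refine hNle.trans ?_
        have : (0:ℝ) ≤ K ^ 12 := by positivity
        nlinarith
      have h4 : (N:ℝ)^2 ≤ (6 * K ^ 12 * T.card)^2 := pow_le_pow_left₀ (by positivity) h3 2
      have h5 : (Λ.card : ℝ) * (T.card:ℝ)^2 ≤ (72 * K ^ 24) * (T.card:ℝ)^2 := by
        refine hΛcard.trans ?_
        calc 2 * (N:ℝ)^2 ≤ 2 * (6 * K ^ 12 * T.card)^2 := by linarith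
          _ = _ := by ring
      exact le_of_mul_le_mul_right h5 (by positivity)
    have h2 : Λ.card ≤ ⌈72 * K ^ 24⌉₊ := by
      have := h1.trans (Nat.le_ceil _)
      exact_mod_cast this
    simp only [n₀]; omega
  obtain ⟨d, x, H, hd, hNP, hpos, hinj⟩ := bohr Λ _ rfl
  obtain ⟨q, hq, hqinj⟩ := pull A' φ hφ x H (by
      intro m hm
      have h1 := hpos (fun j => (m j : ℤ)) (fun j => by simpa using hm j)
      simp only [natCast_zsmul] at h1
      obtain ⟨a, ha, b, hb, c, hc, e, he, h⟩ := hΛ _ h1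
      obtain ⟨a, ha₁, rfl⟩ := Finset.mem_image.1 ha
      obtain ⟨b, hb₁, rfl⟩ := Finset.mem_image.1 hb
      obtain ⟨c, hc₁, rfl⟩ := Finset.mem_image.1 hc
      obtain ⟨e, he₁, rfl⟩ := Finset.mem_image.1 he
      exact ⟨a, ha₁, b, hb₁, c, hc₁, e, he₁, h⟩) (by
      intro m m' hm hm' h
      have h1 := hinj (fun j => (m j : ℤ)) (fun j => (m' j : ℤ)) (fun j => by simpa using hm j)
        (fun j => by simpa using hm' j) (by simpa only [natCast_zsmul] using h)
      funext j
      exact_mod_cast congrFun h1 j)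
  refine ⟨d, q, H, by omega, ?_, ?_, hqinj⟩
  · refine hAN.trans (hNP.trans (Nat.mul_le_mul_right _ ?_))
    exact (hcmono _ hΛle).trans (Nat.le_add_left _ _)
  · intro m hm
    have hsub : 2 • A' ⊆ 2 • A := by
      rw [two_nsmul, two_nsmul]; exact Finset.add_subset_add hA'A hA'A
    exact Finset.sub_subset_sub hsub hsub (hq m hm)

lemma freiman_nat (K : ℝ) (hK1 : 1 ≤ K) : ∃ C : ℝ, ∀ p : ℕ, p.Prime → ∀ A : Finset (ZMod p), A.Nonempty →
    ((A + A).card : ℝ) ≤ K * A.card →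
    ∃ (d : ℕ) (a₀ : ZMod p) (a : Fin d → ZMod p) (H : Fin d → ℕ),
      (∀ j, 1 ≤ H j) ∧ (d : ℝ) ≤ C ∧
      (let P : Finset (ZMod p) :=
        (Fintype.piFinset fun j => Finset.range (H j)).image
          (fun x => a₀ + ∑ j, (x j : ZMod p) * a j)
       A ⊆ P ∧ (P.card : ℝ) ≤ C * A.card) := by
  classical
  obtain ⟨C, hC⟩ := exists_gap K hK1
  let M : ℝ := K ^ 5 * C
  let f : ℕ := ⌊M⌋₊
  refine ⟨max ((C:ℝ) + f) (2 ^ f * K ^ 8), ?_⟩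
  intro p hp A hA hK
  have : Fact p.Prime := ⟨hp⟩
  obtain ⟨d, q, H, hd, hcard, hmem, hinj⟩ := hC p hp A hA hK
  let box : Finset (Fin d → ℕ) := Fintype.piFinset fun j => Finset.range (H j + 1)
  have hbox : ∀ m, m ∈ box ↔ ∀ j, m j ≤ H j := by
    intro m; simp [box, Fintype.mem_piFinset]
  let Q : Finset (ZMod p) := box.image fun m => ∑ j, m j • q j
  have hQcard : Q.card = ∏ j, (H j + 1) := by
    rw [Finset.card_image_of_injOn]
    · simp [box, Fintype.card_piFinset]
    · intro m hm m' hm' h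
      exact hinj m m' ((hbox m).1 hm) ((hbox m').1 hm') h
  have hQsub : Q ⊆ 2 • A - 2 • A := by
    intro y hy
    obtain ⟨m, hm, rfl⟩ := Finset.mem_image.1 hy
    exact hmem m ((hbox m).1 hm)
  have hQne : Q.Nonempty := by
    rw [← Finset.card_pos, hQcard]; positivity
  have hcov : ((A + Q).card : ℝ) ≤ M * Q.card := by
    have h1 : A + Q ⊆ 3 • A - 2 • A := by
      refine (Finset.add_subset_add_left hQsub).trans ?_
      rw [← add_sub_assoc, ← succ_nsmul']
    have h2 : ((A + Q).card : ℝ) ≤ K ^ 5 * A.card :=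
      (by exact_mod_cast Finset.card_le_card h1 : ((A + Q).card : ℝ) ≤ (3 • A - 2 • A).card).trans
        (pr_real A hA K hK 3 2)
    have h3 : (A.card : ℝ) ≤ C * Q.card := by rw [hQcard]; exact_mod_cast hcard
    refine h2.trans ?_
    simp only [M]
    rw [mul_assoc]
    exact mul_le_mul_of_nonneg_left h3 (by positivity)
  obtain ⟨F, hFA, hFcard, hAF⟩ := Finset.ruzsa_covering_add hQne hcov
  have hFf : F.card ≤ f := Nat.le_floor hFcard
  have hQQ : ((Q - Q).card : ℝ) ≤ K ^ 8 * A.card := by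
    have h1 : Q - Q ⊆ 4 • A - 4 • A := by
      refine (Finset.sub_subset_sub hQsub hQsub).trans ?_
      have : (4 • A - 4 • A) = (2 • A - 2 • A) - (2 • A - 2 • A) := by
        rw [sub_eq_add_neg (2 • A - 2 • A), neg_sub, ← add_sub_add_comm, ← add_nsmul]
      rw [this]
    exact (by exact_mod_cast Finset.card_le_card h1 : ((Q - Q).card : ℝ) ≤ (4 • A - 4 • A).card).trans
        (pr_real A hA K hK 4 4)
  let ι := Fin d ⊕ F
  let e : Fin (Fintype.card ι) ≃ ι := (Fintype.equivFin ι).symm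
  let av : ι → ZMod p := Sum.elim q (fun s => s.1)
  let Hv : ι → ℕ := Sum.elim (fun j => 2 * H j + 1) (fun _ => 2)
  let a₀ : ZMod p := - ∑ j, H j • q j
  have hsum : ∀ x : ι → ℕ, a₀ + ∑ j, (x (e j) : ZMod p) * av (e j) =
      (∑ s : F, (x (Sum.inr s) : ZMod p) * s.1) + (∑ j, (x (Sum.inl j) : ZMod p) * q j - ∑ j, (H j : ZMod p) * q j) := by
    intro x
    rw [Equiv.sum_comp e (fun i => (x i : ZMod p) * av i), Fintype.sum_sum_type]
    simp only [a₀, av, Sum.elim_inl, Sum.elim_inr, nsmul_eq_mul]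
    ring
  refine ⟨Fintype.card ι, a₀, fun j => av (e j), fun j => Hv (e j), ?_, ?_, ?_⟩
  · have hHv : ∀ i, 1 ≤ Hv i := by
      rintro (i | s) <;> simp [Hv]
    exact fun j => hHv (e j)
  · refine le_trans ?_ (le_max_left _ _)
    have : Fintype.card ι = d + F.card := by simp [ι]
    rw [this]
    exact_mod_cast Nat.add_le_add hd hFf
  · intro P
    constructor
    · intro y hy
      obtain ⟨s, hs, t, ht, rfl⟩ := Finset.mem_add.1 (hAF hy)
      obtain ⟨u, hu, v, hv, rfl⟩ := Finset.mem_sub.1 ht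
      obtain ⟨m, hm, rfl⟩ := Finset.mem_image.1 hu
      obtain ⟨m', hm', rfl⟩ := Finset.mem_image.1 hv
      rw [hbox] at hm hm'
      let x : ι → ℕ := Sum.elim (fun j => m j + (H j - m' j)) (fun r => if r.1 = s then 1 else 0)
      refine Finset.mem_image.2 ⟨fun j => x (e j), ?_, ?_⟩
      · rw [Fintype.mem_piFinset]
        suffices hlt : ∀ i, x i < Hv i from fun j => Finset.mem_range.2 (hlt (e j))
        rintro (i | r)
        · simp only [x, Hv, Sum.elim_inl]
          have := hm i
          omega
        · simp only [x, Hv, Sum.elim_inr]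
          split_ifs <;> omega
      · rw [hsum x]
        congr 1
        · rw [Finset.sum_eq_single (⟨s, hs⟩ : F)]
          · simp [x]
          · intro r _ hr
            have : r.1 ≠ s := fun h => hr (Subtype.ext h)
            simp [x, this]
          · simp
        · rw [← Finset.sum_sub_distrib, ← Finset.sum_sub_distrib]
          refine Finset.sum_congr rfl fun j _ => ?_
          simp only [x, Sum.elim_inl, nsmul_eq_mul]
          rw [Nat.cast_add, Nat.cast_sub (hm' j)]
          ring
    · let F' : Finset (ZMod p) := (Fintype.piFinset fun _ : F => Finset.range 2).image
        fun z => ∑ s : F, (z s : ZMod p) * s.1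
      have hF' : F'.card ≤ 2 ^ F.card := by
        refine Finset.card_image_le.trans ?_
        simp [Fintype.card_piFinset]
      have hP : P ⊆ F' + (Q - Q) := by
        intro y hy
        obtain ⟨z, hz, rfl⟩ := Finset.mem_image.1 hy
        rw [Fintype.mem_piFinset] at hz
        let x : ι → ℕ := fun i => z (e.symm i)
        have hzx : ∀ j, z j = x (e j) := fun j => by simp [x]
        have hxH : ∀ i, x i < Hv i := fun i => by
          have := hz (e.symm i)
          simpa using this
        simp only [hzx]
        rw [hsum x]
        refine Finset.add_mem_add ?_ ?_
        · refine Finset.mem_image.2 ⟨fun s => x (Sum.inr s), ?_, rfl⟩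
          rw [Fintype.mem_piFinset]
          intro s
          exact Finset.mem_range.2 (hxH (Sum.inr s))
        · refine Finset.mem_sub.2 ⟨∑ j, (x (Sum.inl j) - H j) • q j, ?_, ∑ j, (H j - x (Sum.inl j)) • q j, ?_, ?_⟩
          · refine Finset.mem_image.2 ⟨fun j => x (Sum.inl j) - H j, ?_, rfl⟩
            rw [hbox]
            intro j
            have := hxH (Sum.inl j)
            simp only [Hv, Sum.elim_inl] at this
            omega
          · refine Finset.mem_image.2 ⟨fun j => H j - x (Sum.inl j), ?_, rfl⟩
            rw [hbox]
            intro j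
            omega
          · rw [← Finset.sum_sub_distrib, ← Finset.sum_sub_distrib]
            refine Finset.sum_congr rfl fun j _ => ?_
            simp only [nsmul_eq_mul]
            rcases le_total (H j) (x (Sum.inl j)) with h | h
            · rw [Nat.cast_sub h, Nat.sub_eq_zero_of_le h]; push_cast; ring
            · rw [Nat.cast_sub h, Nat.sub_eq_zero_of_le h]; push_cast; ring
      have h1 : (P.card : ℝ) ≤ F'.card * (Q - Q).card := by
        exact_mod_cast (Finset.card_le_card hP).trans Finset.card_add_le
      have h2 : (F'.card : ℝ) ≤ 2 ^ f := by
        exact_mod_cast hF'.trans (Nat.pow_le_pow_right (by norm_num) hFf)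
      calc (P.card : ℝ) ≤ F'.card * (Q - Q).card := h1
        _ ≤ 2 ^ f * (K ^ 8 * A.card) := by gcongr
        _ = (2 ^ f * K ^ 8) * A.card := by ring
        _ ≤ _ := mul_le_mul_of_nonneg_right (le_max_right _ _) (Nat.cast_nonneg _)

theorem stmt_18 :
    ∃ C : ℝ → ℝ,
      ∀ (K : ℝ), 1 ≤ K →
        ∀ (p : ℕ), p.Prime →
          ∀ A : Finset (ZMod p), A.Nonempty →
            ((A + A).card : ℝ) ≤ K * A.card →
            ∃ (d : ℕ) (a₀ : ZMod p) (a : Fin d → ZMod p) (H : Fin d → ℕ),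
              (∀ j, 1 ≤ H j) ∧ (d : ℝ) ≤ C K ∧
              (let P : Finset (ZMod p) :=
                (Fintype.piFinset fun j => Finset.range (H j)).image
                  (fun x => a₀ + ∑ j, (x j : ZMod p) * a j)
               A ⊆ P ∧ (P.card : ℝ) ≤ Real.exp (C K) * A.card) := by
  have h : ∀ K : ℝ, ∃ C : ℝ, 1 ≤ K → ∀ p : ℕ, p.Prime → ∀ A : Finset (ZMod p), A.Nonempty →
    ((A + A).card : ℝ) ≤ K * A.card →
    ∃ (d : ℕ) (a₀ : ZMod p) (a : Fin d → ZMod p) (H : Fin d → ℕ),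
      (∀ j, 1 ≤ H j) ∧ (d : ℝ) ≤ C ∧
      (let P : Finset (ZMod p) :=
        (Fintype.piFinset fun j => Finset.range (H j)).image
          (fun x => a₀ + ∑ j, (x j : ZMod p) * a j)
       A ⊆ P ∧ (P.card : ℝ) ≤ C * A.card) := by
    intro K
    by_cases hK : 1 ≤ K
    · obtain ⟨C, hC⟩ := freiman_nat K hK
      exact ⟨C, fun _ => hC⟩
    · exact ⟨0, fun h => absurd h hK⟩
  choose C hC using h
  refine ⟨C, ?_⟩
  intro K hK p hp A hA hAA
  obtain ⟨d, a₀, a, H, hH, hd, hsub, hcard⟩ := hC K hK p hp A hA hAA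
  refine ⟨d, a₀, a, H, hH, hd, hsub, hcard.trans ?_⟩
  refine mul_le_mul_of_nonneg_right ?_ (Nat.cast_nonneg _)
  linarith [Real.add_one_le_exp (C K)]
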